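/- For every ε > 0 there exist a constant C > 0 and infinitely many positive integers n for which there is a balanced monotone Boolean function f : {0,1}^n → {0,1} (monotone means f(x) ≥ f(y) whenever x_i ≥ y_i for all i; balanced means Pr[f(x)=1] = 1/2 for uniform x) together with a randomized decision-tree algorithm A such that Pr[A's output on x differs from f(x)] ≤ ε (probability over uniform x and the algorithm's randomness) and whose revealment satisfies δ = max_i δ_i ≤ C · n^{-1/3}. -/

import Mathlib

/-- A deterministic decision tree on `n` bits: a leaf outputs a Boolean value, an
internal node queries a bit and branches on its value. -/
inductive DTree (n : ℕ) : Type
  | leaf : Bool → DTree n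
  | node : Fin n → DTree n → DTree n → DTree n

namespace DTree

/-- The output of a decision tree on input `x`. -/
def eval {n : ℕ} : DTree n → (Fin n → Bool) → Bool
  | .leaf b, _ => b
  | .node i t0 t1, x => if x i then t1.eval x else t0.eval x

/-- Whether the decision tree reads bit `j` when run on input `x`. -/
def readsBit {n : ℕ} : DTree n → (Fin n → Bool) → Fin n → Bool
  | .leaf _, _, _ => false
  | .node i t0 t1, x, j =>
      (i == j) || (if x i then t1.readsBit x j else t0.readsBit x j)

end DTree

/-- A randomized decision-tree algorithm: a (finitely supported) probability
distribution over deterministic decision trees. -/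
structure RandAlg (n : ℕ) where
  m : ℕ
  tree : Fin m → DTree n
  w : Fin m → ℝ
  w_nonneg : ∀ r, 0 ≤ w r
  w_sum : ∑ r, w r = 1

/-- `readProb A i` is the probability δ_i that bit `i` is read, over a uniformly
random input and the internal randomness of the algorithm. -/
noncomputable def readProb {n : ℕ} (A : RandAlg n) (i : Fin n) : ℝ :=
  (∑ r, ∑ x : Fin n → Bool, if (A.tree r).readsBit x i then A.w r else 0) / 2 ^ n

/-- The probability that the algorithm's output differs from `f`, over a uniformly
random input and the internal randomness of the algorithm. -/
noncomputable def errProb {n : ℕ} (A : RandAlg n) (f : (Fin n → Bool) → Bool) : ℝ :=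
  (∑ r, ∑ x : Fin n → Bool, if (A.tree r).eval x ≠ f x then A.w r else 0) / 2 ^ n

/-- A Boolean function is balanced if it takes the value `true` on exactly half
of all inputs. -/
def balanced {n : ℕ} (f : (Fin n → Bool) → Bool) : Prop :=
  2 * Nat.card {x : Fin n → Bool // f x = true} = 2 ^ n

/-- A Boolean function is monotone if it is order preserving coordinatewise. -/
def monotoneBF {n : ℕ} (f : (Fin n → Bool) → Bool) : Prop :=
  ∀ x y : Fin n → Bool, (∀ i, x i ≤ y i) → f x ≤ f y

/-- The ±1 encoding of a Boolean value. -/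
noncomputable def pm (b : Bool) : ℝ := if b then 1 else -1

/-- The variance of the ±1-valued function corresponding to `f`, for a uniformly
random input. -/
noncomputable def pmVar {n : ℕ} (f : (Fin n → Bool) → Bool) : ℝ :=
  (∑ x : Fin n → Bool, pm (f x) ^ 2) / 2 ^ n
    - ((∑ x : Fin n → Bool, pm (f x)) / 2 ^ n) ^ 2

/-!
Arrange the bits in a table with `T` rows and `L` columns, the columns indexed cyclically. A walk
starts in some column, reads one bit in each row, namely the one in its current column, and moves
one column to the right if that bit is set. Let `f` say whether the walk started in column `0`
moves more often than not. For `T` odd this is balanced, since the number of moves is binomial, and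
it is monotone, since unrolled walks cannot overtake each other.

The algorithm starts the walk in a uniformly random column `s < L` instead. Its column then stays
uniform, so that each bit is read with probability `1 / L`. The final positions (start column plus
number of moves) of the two walks are ordered, and both are shifted binomials, so the outputs
differ with probability at most `s * T.choose (T / 2) / 2 ^ T ≤ L / √T`. For `T` of order
`(L / ε) ^ 2` this is at most `ε`, while `n = T * L` is of order `L ^ 3`.
-/

open Finset
open scoped BigOperators

section Averages

variable {M : Type*} [AddCommMonoid M] [Module ℚ≥0 M]

lemma expect_pi_apply {ι α : Type*} [Fintype ι] [DecidableEq ι] [Fintype α] [Nonempty α]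
    (i : ι) (φ : α → M) : 𝔼 a : ι → α, φ (a i) = 𝔼 b, φ b := by
  rw [Fintype.expect_equiv (Equiv.funSplitAt i α) (fun a ↦ φ (a i)) (fun p ↦ φ p.1) fun _ ↦ rfl,
    ← univ_product_univ, expect_product]
  simp only [Fintype.expect_const]

lemma expect_fin_succ_pi {α : Type*} [Fintype α] {n : ℕ} (F : (Fin (n + 1) → α) → M) :
    𝔼 r, F r = 𝔼 a, 𝔼 r : Fin n → α, F (Fin.cons a r) := by
  rw [← expect_product', univ_product_univ]
  exact (Fintype.expect_equiv (Fin.consEquiv fun _ ↦ α) _ _ fun _ ↦ rfl).symm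

lemma expect_bool (φ : Bool → ℝ) : 𝔼 b, φ b = (φ true + φ false) / 2 := by
  rw [Fintype.expect_eq_sum_div_card, Fintype.sum_bool, Fintype.card_bool, Nat.cast_ofNat]

lemma expect_fin_natCast_zmod {L : ℕ} [NeZero L] (g : ZMod L → M) :
    𝔼 s : Fin L, g (s : ℕ) = 𝔼 q, g q := by
  have surjective : Function.Surjective fun s : Fin L ↦ ((s : ℕ) : ZMod L) :=
    fun q ↦ ⟨⟨q.val, q.val_lt⟩, by simp⟩
  exact Fintype.expect_bijective _
    ((Fintype.bijective_iff_surjective_and_card _).2 ⟨surjective, by simp⟩) _ _ fun _ ↦ rfl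

end Averages

section Binomial

lemma mul_centralBinom_sq_le_sixteen_pow (m : ℕ) :
    (2 * m + 1) * m.centralBinom ^ 2 ≤ 16 ^ m := by
  induction m with
  | zero => simp
  | succ m ih =>
    refine Nat.le_of_mul_le_mul_left (c := (m + 1) ^ 2) ?_ (by positivity)
    calc (m + 1) ^ 2 * ((2 * (m + 1) + 1) * (m + 1).centralBinom ^ 2)
        = (2 * m + 3) * ((m + 1) * (m + 1).centralBinom) ^ 2 := by ring
      _ = 4 * (2 * m + 1) * (2 * m + 3) * ((2 * m + 1) * m.centralBinom ^ 2) := by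
          rw [Nat.succ_mul_centralBinom_succ]; ring
      _ ≤ 16 * (m + 1) ^ 2 * 16 ^ m := Nat.mul_le_mul (by nlinarith) ih
      _ = (m + 1) ^ 2 * 16 ^ (m + 1) := by ring

lemma mul_choose_half_sq_le_four_pow (n : ℕ) : n * n.choose (n / 2) ^ 2 ≤ 4 ^ n := by
  obtain ⟨m, rfl | rfl⟩ := n.even_or_odd'
  · rw [Nat.mul_div_cancel_left _ two_pos, ← Nat.centralBinom_eq_two_mul_choose]
    calc 2 * m * m.centralBinom ^ 2 ≤ (2 * m + 1) * m.centralBinom ^ 2 := by gcongr; omega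
      _ ≤ 16 ^ m := mul_centralBinom_sq_le_sixteen_pow m
      _ = 4 ^ (2 * m) := by rw [pow_mul]; norm_num
  · have double : (m + 1).centralBinom = 2 * (2 * m + 1).choose m := by
      rw [Nat.centralBinom_eq_two_mul_choose, Nat.mul_add_one, Nat.choose_succ_succ',
        Nat.choose_symm_half, ← two_mul]
    rw [show (2 * m + 1) / 2 = m by omega]
    refine Nat.le_of_mul_le_mul_left (c := 4) ?_ four_pos
    calc 4 * ((2 * m + 1) * (2 * m + 1).choose m ^ 2)
        = (2 * m + 1) * (m + 1).centralBinom ^ 2 := by rw [double]; ring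
      _ ≤ (2 * (m + 1) + 1) * (m + 1).centralBinom ^ 2 := by gcongr; omega
      _ ≤ 16 ^ (m + 1) := mul_centralBinom_sq_le_sixteen_pow (m + 1)
      _ = 4 * 4 ^ (2 * m + 1) := by
          rw [← pow_succ', show 2 * m + 1 + 1 = 2 * (m + 1) by ring, pow_mul]
          norm_num

lemma choose_half_div_two_pow_le {n : ℕ} (hn : 0 < n) :
    (n.choose (n / 2) : ℝ) / 2 ^ n ≤ 1 / √n := by
  rw [div_le_div_iff₀ (by positivity) (by positivity), one_mul]
  refine (sq_le_sq₀ (by positivity) (by positivity)).1 ?_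
  calc (n.choose (n / 2) * √n : ℝ) ^ 2 = n * n.choose (n / 2) ^ 2 := by
        rw [mul_pow, Real.sq_sqrt n.cast_nonneg, mul_comm]
    _ ≤ 4 ^ n := by exact_mod_cast mul_choose_half_sq_le_four_pow n
    _ = (2 ^ n) ^ 2 := by rw [← pow_mul, mul_comm, pow_mul]; norm_num

/-- The mean of `g` under the binomial distribution with parameters `n` and `1 / 2`. -/
noncomputable def binomialMean (n : ℕ) (g : ℕ → ℝ) : ℝ :=
  (∑ k ∈ range (n + 1), n.choose k * g k) / 2 ^ n

lemma binomialMean_zero (g : ℕ → ℝ) : binomialMean 0 g = g 0 := by simp [binomialMean]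

lemma binomialMean_succ (n : ℕ) (g : ℕ → ℝ) :
    binomialMean (n + 1) g = (binomialMean n (fun k ↦ g (k + 1)) + binomialMean n g) / 2 := by
  simp only [binomialMean]
  rw [sum_choose_succ_mul (fun k _ ↦ g k)]
  field_simp
  ring

lemma binomialMean_const (n : ℕ) (c : ℝ) : binomialMean n (fun _ ↦ c) = c := by
  have total : ∑ k ∈ range (n + 1), (n.choose k : ℝ) = 2 ^ n := by
    exact_mod_cast Nat.sum_range_choose n
  rw [binomialMean, ← sum_mul, total]
  field_simp

lemma binomialMean_add (n : ℕ) (g h : ℕ → ℝ) :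
    binomialMean n (fun k ↦ g k + h k) = binomialMean n g + binomialMean n h := by
  simp only [binomialMean, mul_add, sum_add_distrib, add_div]

lemma expect_binomialMean {ι : Type*} [Fintype ι] (n : ℕ) (g : ι → ℕ → ℝ) :
    𝔼 i, binomialMean n (g i) = binomialMean n fun k ↦ 𝔼 i, g i k := by
  simp only [binomialMean, ← expect_div, expect_sum_comm, mul_expect]

lemma binomialMean_add_eq_le (n s h : ℕ) :
    binomialMean n (fun k ↦ if s + k = h then 1 else 0) ≤ n.choose (n / 2) / 2 ^ n := by
  rw [binomialMean]
  gcongr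
  by_cases hs : s ≤ h
  · simp only [show ∀ k, s + k = h ↔ k = h - s by omega, mul_ite, mul_one, mul_zero, sum_ite_eq']
    split_ifs
    · exact_mod_cast Nat.choose_le_middle _ n
    · positivity
  · simp only [show ∀ k, s + k ≠ h by omega, if_false, mul_zero, sum_const_zero]
    positivity

lemma binomialMean_lt_add_sub_le (n s h : ℕ) :
    binomialMean n (fun k ↦ if h < s + k then 1 else 0) -
      binomialMean n (fun k ↦ if h < k then 1 else 0) ≤ s * (n.choose (n / 2) / 2 ^ n) := by
  induction s with
  | zero => simp
  | succ s ih =>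
    have split : ∀ k, (if h < s + 1 + k then (1 : ℝ) else 0) =
        (if h < s + k then 1 else 0) + if s + k = h then 1 else 0 := by
      intro k
      split_ifs <;> first | omega | norm_num
    simp only [split, binomialMean_add]
    push_cast
    linarith [binomialMean_add_eq_le n s h]

lemma binomialMean_half_lt {n : ℕ} (hn : Odd n) :
    binomialMean n (fun k ↦ if n / 2 < k then 1 else 0) = 1 / 2 := by
  obtain ⟨m, rfl⟩ := hn
  have lower : binomialMean (2 * m + 1) (fun k ↦ if k ≤ m then 1 else 0) = 1 / 2 := by
    have filter_le : {k ∈ range (2 * m + 1 + 1) | k ≤ m} = range (m + 1) := by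
      ext k
      simp only [mem_filter, mem_range]
      omega
    have half : ∑ k ∈ range (m + 1), ((2 * m + 1).choose k : ℝ) = 4 ^ m := by
      exact_mod_cast Nat.sum_range_choose_halfway m
    simp only [binomialMean, mul_ite, mul_one, mul_zero]
    rw [← sum_filter, filter_le, half, pow_succ, pow_mul]
    field_simp
    norm_num
  have total := binomialMean_const (2 * m + 1) 1
  have split : ∀ k, (1 : ℝ) = (if k ≤ m then 1 else 0) + if m < k then 1 else 0 := by
    intro k
    split_ifs <;> first | omega | norm_num
  rw [funext split, binomialMean_add, lower] at total
  rw [show (2 * m + 1) / 2 = m by omega]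
  linarith

end Binomial

section Walk

variable {L : ℕ}

/-- The position at time `t` of the walk started at `s` that is driven by a table of bits: at
each time it moves one step up if the bit of the current row in the column of its position is
set, and stays put otherwise. Columns are indexed modulo `L`, but the position is kept in `ℕ`, so
that walks can be compared. -/
def walk : {T : ℕ} → (Fin T → ZMod L → Bool) → ℕ → Fin (T + 1) → ℕ
  | 0, _, s, _ => s
  | _ + 1, r, s, t => Fin.cases s (walk (Fin.tail r) (s + (r 0 s).toNat)) t

lemma walk_zero {T : ℕ} (r : Fin T → ZMod L → Bool) (s : ℕ) : walk r s 0 = s := by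
  cases T <;> rfl

lemma walk_succ {T : ℕ} (r : Fin (T + 1) → ZMod L → Bool) (s : ℕ) (t : Fin (T + 1)) :
    walk r s t.succ = walk (Fin.tail r) (s + (r 0 s).toNat) t := rfl

lemma walk_mono {T : ℕ} {r r' : Fin T → ZMod L → Bool} (hr : r ≤ r') {s s' : ℕ} (hs : s ≤ s')
    (t : Fin (T + 1)) : walk r s t ≤ walk r' s' t := by
  induction T generalizing s s' with
  | zero => exact hs
  | succ T ih =>
    induction t using Fin.cases with
    | zero => simpa only [walk_zero]
    | succ t =>
      refine ih (fun i ↦ hr i.succ) ?_ t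
      rcases hs.lt_or_eq with hlt | rfl
      · have := (r 0 s).toNat_le
        omega
      · exact Nat.add_le_add_left (Bool.toNat_le_toNat (hr 0 s)) s

variable [NeZero L]

/-- Every step of the walk uses a fresh row, so it goes up with probability `1 / 2` independently
of the past. -/
lemma expect_walk {T : ℕ} (g : ℕ → ℝ) (s : ℕ) (t : Fin (T + 1)) :
    𝔼 r : Fin T → ZMod L → Bool, g (walk r s t) = binomialMean t fun k ↦ g (s + k) := by
  induction T generalizing s with
  | zero => simp [Fin.fin_one_eq_zero t, walk_zero, binomialMean_zero]
  | succ T ih =>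
    induction t using Fin.cases with
    | zero => simp [walk_zero, binomialMean_zero]
    | succ t =>
      simp only [expect_fin_succ_pi, walk_succ, Fin.cons_zero, Fin.tail_cons, ih]
      rw [expect_pi_apply (s : ZMod L) fun b : Bool ↦ binomialMean t fun k ↦ g (s + b.toNat + k),
        expect_bool, Fin.val_succ, binomialMean_succ]
      simp only [Bool.toNat_true, Bool.toNat_false, add_zero, add_assoc, add_comm 1]

lemma expect_expect_walk_natCast {T : ℕ} (g : ZMod L → ℝ) (t : Fin (T + 1)) :
    𝔼 s : Fin L, 𝔼 r : Fin T → ZMod L → Bool, g (walk r s t) = 𝔼 q, g q := by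
  have shift : ∀ k : ℕ, 𝔼 s : Fin L, g ((s + k : ℕ) : ZMod L) = 𝔼 q, g q := by
    intro k
    simp only [Nat.cast_add]
    rw [expect_fin_natCast_zmod fun q : ZMod L ↦ g (q + k)]
    exact Fintype.expect_equiv (Equiv.addRight (k : ZMod L)) _ _ fun _ ↦ rfl
  simp only [expect_walk fun p : ℕ ↦ g p, expect_binomialMean, shift, binomialMean_const]

end Walk

section WalkTree

variable {L n : ℕ}

/-- The decision tree that runs the walk started at `s` on the table whose entry in row `t` and
column `q` is the input bit `cell t q`, and outputs `out p` if the walk ends at `p`. -/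
def walkTree (out : ℕ → Bool) : {T : ℕ} → (Fin T → ZMod L → Fin n) → ℕ → DTree n
  | 0, _, s => .leaf (out s)
  | _ + 1, cell, s =>
      .node (cell 0 s) (walkTree out (Fin.tail cell) s) (walkTree out (Fin.tail cell) (s + 1))

lemma eval_walkTree (out : ℕ → Bool) {T : ℕ} (cell : Fin T → ZMod L → Fin n) (s : ℕ)
    (x : Fin n → Bool) :
    (walkTree out cell s).eval x = out (walk (fun t q ↦ x (cell t q)) s (Fin.last T)) := by
  induction T generalizing s with
  | zero => rfl
  | succ T ih =>
    rw [← Fin.succ_last, walk_succ]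
    cases hx : x (cell 0 s) <;> simp [walkTree, DTree.eval, ih, hx] <;> rfl

lemma readsBit_walkTree_iff (out : ℕ → Bool) {T : ℕ} (cell : Fin T → ZMod L → Fin n) (s : ℕ)
    (x : Fin n → Bool) (j : Fin n) :
    (walkTree out cell s).readsBit x j ↔
      ∃ t : Fin T, cell t (walk (fun t q ↦ x (cell t q)) s t.castSucc) = j := by
  induction T generalizing s with
  | zero => simp [walkTree, DTree.readsBit]
  | succ T ih =>
    simp only [Fin.exists_fin_succ, Fin.castSucc_zero, walk_zero, ← Fin.succ_castSucc, walk_succ]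
    cases hx : x (cell 0 s) <;> simp [walkTree, DTree.readsBit, ih, hx] <;> rfl

end WalkTree

section RandomizedTrees

variable {n m : ℕ}

lemma sum_sum_ite_div_two_pow_eq_expect (P : Fin m → (Fin n → Bool) → Prop)
    [∀ s x, Decidable (P s x)] :
    (∑ s, ∑ x, if P s x then (1 / m : ℝ) else 0) / 2 ^ n =
      𝔼 s, 𝔼 x, if P s x then (1 : ℝ) else 0 := by
  simp only [Fintype.expect_eq_sum_div_card, Fintype.card_fin, Fintype.card_fun,
    Fintype.card_bool, Nat.cast_pow, Nat.cast_ofNat, ← sum_div]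
  rw [div_right_comm]
  congr 1
  simp only [sum_div, ite_div, zero_div]

variable [NeZero m]

/-- The algorithm that runs a uniformly chosen member of a family of decision trees. -/
noncomputable def RandAlg.uniform (tree : Fin m → DTree n) : RandAlg n where
  m := m
  tree := tree
  w := fun _ ↦ 1 / m
  w_nonneg := fun _ ↦ by positivity
  w_sum := by simp [NeZero.ne]

lemma RandAlg.readProb_uniform (tree : Fin m → DTree n) (i : Fin n) :
    readProb (uniform tree) i = 𝔼 s, 𝔼 x, if (tree s).readsBit x i then (1 : ℝ) else 0 :=
  sum_sum_ite_div_two_pow_eq_expect fun s x ↦ (tree s).readsBit x i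

lemma RandAlg.errProb_uniform (tree : Fin m → DTree n) (f : (Fin n → Bool) → Bool) :
    errProb (uniform tree) f = 𝔼 s, 𝔼 x, if (tree s).eval x ≠ f x then (1 : ℝ) else 0 :=
  sum_sum_ite_div_two_pow_eq_expect fun s x ↦ (tree s).eval x ≠ f x

lemma balanced_iff_expect_eq_half (f : (Fin n → Bool) → Bool) :
    balanced f ↔ 𝔼 x, (if f x then (1 : ℝ) else 0) = 1 / 2 := by
  rw [balanced, Nat.card_eq_fintype_card, Fintype.card_subtype, Fintype.expect_eq_sum_div_card,
    sum_boole, div_eq_div_iff (by positivity) two_ne_zero, mul_comm, one_mul]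
  simp only [Fintype.card_fun, Fintype.card_bool, Fintype.card_fin]
  norm_cast

end RandomizedTrees

section WalkMajority

variable {T L n : ℕ} (e : Fin T × ZMod L ≃ Fin n)

/-- Whether the walk started at `s`, on the table into which `e` arranges the input bits, ends
above `T / 2`. For `s = 0` and `T` odd this asks whether most of its steps go up. -/
def walkMajority (s : ℕ) (x : Fin n → Bool) : Bool :=
  T / 2 < walk (fun t q ↦ x (e (t, q))) s (Fin.last T)

/-- The algorithm that evaluates `walkMajority e s` for a uniformly random start `s < L`. -/
noncomputable def randomStartAlg [NeZero L] : RandAlg n :=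
  .uniform fun s : Fin L ↦ walkTree (fun p ↦ T / 2 < p) (fun t q ↦ e (t, q)) s

lemma walkMajority_mono {s s' : ℕ} (hs : s ≤ s') {x y : Fin n → Bool} (hxy : x ≤ y) :
    walkMajority e s x ≤ walkMajority e s' y := by
  have ends_le := walk_mono (fun t q ↦ hxy (e (t, q))) hs (Fin.last T)
  simp only [walkMajority, Bool.le_iff_imp, decide_eq_true_eq]
  omega

lemma monotoneBF_walkMajority (s : ℕ) : monotoneBF (walkMajority e s) :=
  fun _ _ hxy ↦ walkMajority_mono e le_rfl hxy

variable [NeZero L]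

lemma expect_comp_table {M : Type*} [AddCommMonoid M] [Module ℚ≥0 M]
    (F : (Fin T → ZMod L → Bool) → M) :
    𝔼 x : Fin n → Bool, F (fun t q ↦ x (e (t, q))) = 𝔼 r, F r :=
  Fintype.expect_equiv ((e.symm.arrowCongr (.refl Bool)).trans (.curry _ _ _)) _ _ fun _ ↦ rfl

lemma expect_walkMajority (s : ℕ) :
    𝔼 x, (if walkMajority e s x then (1 : ℝ) else 0) =
      binomialMean T fun k ↦ if T / 2 < s + k then 1 else 0 := by
  simp only [walkMajority, decide_eq_true_eq]
  rw [expect_comp_table e fun r ↦ if T / 2 < walk r s (Fin.last T) then 1 else 0,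
    expect_walk fun p ↦ if T / 2 < p then 1 else 0, Fin.val_last]

lemma balanced_walkMajority (hT : Odd T) : balanced (walkMajority e 0) := by
  rw [balanced_iff_expect_eq_half, expect_walkMajority]
  simpa only [zero_add] using binomialMean_half_lt hT

lemma expect_walkMajority_ne_le (hT : 0 < T) (s : ℕ) :
    𝔼 x, (if walkMajority e s x ≠ walkMajority e 0 x then (1 : ℝ) else 0) ≤ s / √T := by
  have ne_eq_sub : ∀ x, (if walkMajority e s x ≠ walkMajority e 0 x then (1 : ℝ) else 0) =
      (if walkMajority e s x then 1 else 0) - if walkMajority e 0 x then 1 else 0 := by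
    intro x
    have outputs_le := walkMajority_mono e s.zero_le (le_refl x)
    revert outputs_le
    cases h₀ : walkMajority e 0 x <;> cases hs : walkMajority e s x <;> simp
  simp only [ne_eq_sub, expect_sub_distrib, expect_walkMajority, zero_add]
  calc _ ≤ s * (T.choose (T / 2) / 2 ^ T : ℝ) := binomialMean_lt_add_sub_le T s (T / 2)
    _ ≤ s * (1 / √T) := by gcongr ?_ * ?_; exact choose_half_div_two_pow_le hT
    _ = s / √T := mul_one_div _ _

lemma errProb_randomStartAlg_le (hT : 0 < T) :
    errProb (randomStartAlg e) (walkMajority e 0) ≤ L / √T := by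
  rw [randomStartAlg, RandAlg.errProb_uniform]
  refine expect_le univ_nonempty fun s _ ↦ ?_
  simp only [eval_walkTree]
  calc _ ≤ (s : ℕ) / √T := expect_walkMajority_ne_le e hT s
    _ ≤ L / √T := by gcongr; exact s.isLt.le

lemma readProb_randomStartAlg (i : Fin n) : readProb (randomStartAlg e) i = 1 / L := by
  obtain ⟨⟨t, q⟩, rfl⟩ := e.surjective i
  have reads_iff : ∀ (s : ℕ) (x : Fin n → Bool),
      (walkTree (fun p ↦ T / 2 < p) (fun t q ↦ e (t, q)) s).readsBit x (e (t, q)) ↔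
        (walk (fun t q ↦ x (e (t, q))) s t.castSucc : ZMod L) = q := by
    intro s x
    simp [readsBit_walkTree_iff]
  rw [randomStartAlg, RandAlg.readProb_uniform]
  simp only [reads_iff]
  calc 𝔼 s : Fin L, 𝔼 x : Fin n → Bool,
        (if (walk (fun t q ↦ x (e (t, q))) s t.castSucc : ZMod L) = q then (1 : ℝ) else 0)
      = 𝔼 s : Fin L, 𝔼 r : Fin T → ZMod L → Bool,
          if (walk r s t.castSucc : ZMod L) = q then (1 : ℝ) else 0 :=
        expect_congr rfl fun s _ ↦ expect_comp_table e fun r ↦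
          if (walk r s t.castSucc : ZMod L) = q then 1 else 0
    _ = 𝔼 p : ZMod L, if p = q then (1 : ℝ) else 0 :=
        expect_expect_walk_natCast (fun p ↦ if p = q then 1 else 0) t.castSucc
    _ = 1 / L := by simp

end WalkMajority

section Parameters

lemma div_sqrt_le_one_div {a b c : ℝ} (ha : 0 < a) (hb : 0 < b) (h : (a * b) ^ 2 ≤ c) :
    b / √c ≤ 1 / a := by
  calc b / √c ≤ b / (a * b) := by gcongr; exact Real.le_sqrt_of_sq_le h
    _ = 1 / a := by field_simp

lemma one_div_le_div_rpow_third {C L n : ℝ} (hC : 0 < C) (hL : 0 < L) (hn : 0 < n)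
    (h : n ≤ (C * L) ^ 3) : 1 / L ≤ C / n ^ ((1 : ℝ) / 3) := by
  have root_le : n ^ ((1 : ℝ) / 3) ≤ C * L := by
    rw [one_div, Real.rpow_inv_le_iff_of_pos hn.le (by positivity) (by norm_num)]
    exact_mod_cast h
  rw [div_le_div_iff₀ hL (by positivity)]
  linarith

lemma two_mul_sq_add_one_mul_le {a b : ℕ} (ha : 0 < a) (hb : 0 < b) :
    (2 * (a * b) ^ 2 + 1) * b ≤ (3 * a * b) ^ 3 := by
  calc (2 * (a * b) ^ 2 + 1) * b ≤ (2 * (a * b) ^ 2 + (a * b) ^ 2) * (a * b) := by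
        gcongr
        · exact Nat.one_le_pow _ _ (by positivity)
        · exact Nat.le_mul_of_pos_left b ha
    _ = 3 * (a * b) ^ 3 := by ring
    _ ≤ 27 * (a * b) ^ 3 := by gcongr; norm_num
    _ = (3 * a * b) ^ 3 := by ring

end Parameters

/-- For every `ε > 0` there exist a constant `C > 0` and
infinitely many positive integers `n` for which there is a balanced monotone
Boolean function on `n` bits together with a randomized decision-tree algorithm
whose error probability is at most `ε` and whose revealment satisfies
`δ = max_i δ_i ≤ C · n^(-1/3)`. -/
theorem statement3 :
    ∀ ε > (0 : ℝ), ∃ C > (0 : ℝ), ∀ N : ℕ, ∃ n, N ≤ n ∧ 0 < n ∧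
      ∃ (f : (Fin n → Bool) → Bool) (A : RandAlg n),
        balanced f ∧
        monotoneBF f ∧
        errProb A f ≤ ε ∧
        (∀ i, readProb A i ≤ C / (n : ℝ) ^ ((1 : ℝ) / 3)) := by
  intro ε hε
  obtain ⟨K, hK⟩ := exists_nat_one_div_lt hε
  refine ⟨3 * (K + 1), by positivity, fun N ↦ ?_⟩
  set L := N + 1
  set T := 2 * ((K + 1) * L) ^ 2 + 1 with hT
  let e : Fin T × ZMod L ≃ Fin (T * L) := Fintype.equivFinOfCardEq (by simp)
  refine ⟨T * L, ?_, by positivity, walkMajority e 0, randomStartAlg e,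
    balanced_walkMajority e ⟨_, hT⟩, monotoneBF_walkMajority e 0, ?_, fun i ↦ ?_⟩
  · calc N ≤ L := N.le_succ
      _ ≤ T * L := Nat.le_mul_of_pos_left L (by positivity)
  · calc errProb _ _ ≤ L / √T := errProb_randomStartAlg_le e (by positivity)
      _ ≤ 1 / (K + 1) := div_sqrt_le_one_div (by positivity) (by positivity) (by
          rw [hT]; push_cast; nlinarith [sq_nonneg (((K : ℝ) + 1) * L)])
      _ ≤ ε := hK.le
  · rw [readProb_randomStartAlg]
    refine one_div_le_div_rpow_third (by positivity) (by positivity) (by positivity) ?_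
    exact_mod_cast two_mul_sq_add_one_mul_le K.succ_pos N.succ_pos
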